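/- Let C be a regular, irreducible curve that is projective over a field k, with function field F = k(C), arithmetic genus t, and a k-rational point O. For every integer d ≥ 3t + 1, the tame symbol T : K₂(F) → ∐_{P ∈ C} k(P)^* and its restriction F_{d−1} → ∐_{P ∈ {O} ∪ C_{≤ d−1}} k(P)^* have the same kernel, and their cokernels are isomorphic. -/

import Mathlib

open scoped TensorProduct

noncomputable section

/-- The set of Steinberg relations in `Fˣ ⊗_ℤ Fˣ` (written additively):
the elements `a ⊗ b` with `a + b = 1` in `F`. -/
def SteinbergSet (F : Type*) [Field F] :
    Set (TensorProduct ℤ (Additive Fˣ) (Additive Fˣ)) :=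
  { x | ∃ a b : Fˣ, (a : F) + (b : F) = 1 ∧
      x = Additive.ofMul a ⊗ₜ[ℤ] Additive.ofMul b }

/-- Milnor's `K₂` of a field, via Matsumoto's presentation. -/
abbrev K2 (F : Type*) [Field F] :=
  (TensorProduct ℤ (Additive Fˣ) (Additive Fˣ)) ⧸
    Submodule.span ℤ (SteinbergSet F)

/-- The symbol `{f, g}` in `K₂(F)`. -/
def symbol {F : Type*} [Field F] (f g : Fˣ) : K2 F :=
  Submodule.Quotient.mk (Additive.ofMul f ⊗ₜ[ℤ] Additive.ofMul g)

/-- The degree of a divisor `D` on the curve: `∑_P deg(P) · D(P)`,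
where `deg P = [k(P) : k]`. -/
def divDeg (k : Type*) [Field k] {Pt : Type*} (res : Pt → Type*)
    [∀ P, Field (res P)] [∀ P, Algebra k (res P)] (D : Pt →₀ ℤ) : ℤ :=
  ∑ᶠ P, (Module.finrank k (res P) : ℤ) * D P

/-- Axioms for a regular, irreducible curve `C`, projective over a field `k`, with
`H⁰(C, O_C) = k`, presented through: its function field `F = k(C)`, its set `Pt` of
closed points, the residue fields `res P = k(P)`, the normalized valuations `ord P`,
the evaluation maps `ev P` (evaluation at `P` of functions regular at `P`), the
Riemann-Roch spaces `L D = H⁰(C, O_C(D))`, and the arithmetic genus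
`t = dim_k H¹(C, O_C)`, characterized by the Riemann-Roch relations. -/
structure IsProjCurve (k F : Type*) [Field k] [Field F] [Algebra k F]
    {Pt : Type*} (res : Pt → Type*) [∀ P, Field (res P)] [∀ P, Algebra k (res P)]
    (ord : Pt → F → ℤ) (ev : ∀ P, F → res P)
    (L : (Pt →₀ ℤ) → Submodule k F) (t : ℕ) : Prop where
  finiteDimensional_res : ∀ P, FiniteDimensional k (res P)
  ord_mul : ∀ P (f g : F), f ≠ 0 → g ≠ 0 → ord P (f * g) = ord P f + ord P g
  ord_add : ∀ P (f g : F), f ≠ 0 → g ≠ 0 → f + g ≠ 0 →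
      min (ord P f) (ord P g) ≤ ord P (f + g)
  ord_algebraMap : ∀ P (c : k), c ≠ 0 → ord P (algebraMap k F c) = 0
  ord_uniformizer : ∀ P, ∃ f : F, f ≠ 0 ∧ ord P f = 1
  ord_separates : ∀ P Q, (∀ f : F, ord P f = ord Q f) → P = Q
  support_finite : ∀ f : F, f ≠ 0 → {P | ord P f ≠ 0}.Finite
  degree_formula : ∀ f : F, f ≠ 0 →
      ∑ᶠ P, (Module.finrank k (res P) : ℤ) * ord P f = 0
  ev_zero : ∀ P, ev P 0 = 0
  ev_one : ∀ P, ev P 1 = 1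
  ev_add : ∀ P (f g : F), f ≠ 0 → g ≠ 0 → 0 ≤ ord P f → 0 ≤ ord P g →
      ev P (f + g) = ev P f + ev P g
  ev_mul : ∀ P (f g : F), f ≠ 0 → g ≠ 0 → 0 ≤ ord P f → 0 ≤ ord P g →
      ev P (f * g) = ev P f * ev P g
  ev_algebraMap : ∀ P (c : k), ev P (algebraMap k F c) = algebraMap k (res P) c
  ev_eq_zero_iff : ∀ P (f : F), f ≠ 0 → 0 ≤ ord P f → (ev P f = 0 ↔ 0 < ord P f)
  ev_surjective : ∀ P (y : res P), ∃ f : F, f ≠ 0 ∧ 0 ≤ ord P f ∧ ev P f = y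
  mem_L : ∀ (D : Pt →₀ ℤ) (f : F), f ∈ L D ↔ (f ≠ 0 → ∀ P, 0 ≤ D P + ord P f)
  finiteDimensional_L : ∀ D, FiniteDimensional k (L D)
  global_sections : ∀ f : F, f ∈ L 0 ↔ ∃ c : k, algebraMap k F c = f
  rr_ineq : ∀ D : Pt →₀ ℤ,
      divDeg k res D + 1 - t ≤ (Module.finrank k (L D) : ℤ)
  rr_eq : ∀ D : Pt →₀ ℤ, 2 * (t : ℤ) - 2 < divDeg k res D →
      (Module.finrank k (L D) : ℤ) = divDeg k res D + 1 - t

/-- `T` is the tame symbol `K₂(F) → ∐_{P} k(P)^*`: it is determined by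
`T_P({f,g}) = (-1)^{ord_P(f)·ord_P(g)} (f^{ord_P(g)} / g^{ord_P(f)})(P)`. -/
def IsTameSymbol {F : Type*} [Field F] {Pt : Type*} {res : Pt → Type*}
    [∀ P, Field (res P)]
    (ord : Pt → F → ℤ) (ev : ∀ P, F → res P)
    (T : K2 F →+ Π₀ P : Pt, Additive ((res P)ˣ)) : Prop :=
  ∀ (f g : Fˣ) (P : Pt),
    ((Additive.toMul (T (symbol f g) P) : (res P)ˣ) : res P) =
      ev P (((-1 : Fˣ) ^ (ord P (f : F) * ord P (g : F)) *
        f ^ (ord P (g : F)) * g ^ (-ord P (f : F)) : Fˣ) : F)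

/-- `F_d`: the subgroup of `K₂(F)` generated by the symbols `{f, g}` with
`|(f)| ∪ |(g)| ⊆ C_{≤ d}`. -/
def Fsub (k : Type*) [Field k] {F : Type*} [Field F] {Pt : Type*} (res : Pt → Type*)
    [∀ P, Field (res P)] [∀ P, Algebra k (res P)]
    (ord : Pt → F → ℤ) (d : ℕ) : AddSubgroup (K2 F) :=
  AddSubgroup.closure
    { x | ∃ f g : Fˣ,
        (∀ P, ord P (f : F) ≠ 0 → Module.finrank k (res P) ≤ d) ∧
        (∀ P, ord P (g : F) ≠ 0 → Module.finrank k (res P) ≤ d) ∧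
        x = symbol f g }

/-!
Put `n = d - 1 ≥ 3t` and let `U_n` be the group of functions whose divisor is supported on
`{O} ∪ C_{≤ n}`. Both kernel and cokernel statements follow from `F_n = T⁻¹(∐ k(P)^*)` and
`im T + ∐ k(P)^* = ∐_{P ∈ C} k(P)^*`, the smaller coproduct being over `{O} ∪ C_{≤ n}`. These are
proved by descent on the degree: for each `P ≠ O` of degree `n + 1` there is a uniformizer `π_P`
whose other zeros and poles lie in `{O} ∪ C_{≤ n}`, and `F_{n+1} = F_n + ∑_P {U_n, π_P}`, so one
needs `{u, π_P} ∈ F_n` whenever `u ∈ U_n` has value `1` at `P`.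

If `a, b ∈ U_n` have poles of order at most `2n + 1` at `O` and `a(P) = b(P)`, then
`1 - a / b = π_P h / b` with `h ∈ U_n`, because only degree `n` remains for the other zeros of
`b - a`; the Steinberg relation gives `{a / b, π_P} ∈ F_n`. Hence `{f / g, π_P}` modulo `F_n`
depends only on `f(P) / g(P)` when `f` and `g` have poles of order at most `n` at `O`. The values
at `P` of such functions form a subspace of codimension at most `t` in the `(n + 1)`-dimensional
`k(P)`, and `3 (n + 1 - t) > 2 (n + 1)` lets one write any two values as `p(P) / q(P)` and
`q(P) / r(P)`, so that the dependence is multiplicative. Finally `U_n` is generated by its elements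
with poles of order at most `n + t` at `O`, each of which agrees with such a fraction modulo `F_n`.
-/

section MilnorK2

variable {F : Type*} [Field F]

lemma symbol_mul_left (a b c : Fˣ) : symbol (a * b) c = symbol a c + symbol b c := by
  simp [symbol, TensorProduct.add_tmul]

lemma symbol_mul_right (a b c : Fˣ) : symbol a (b * c) = symbol a b + symbol a c := by
  simp [symbol, TensorProduct.tmul_add]

lemma symbol_one_left (c : Fˣ) : symbol 1 c = 0 := by
  simp [symbol]

lemma symbol_one_right (c : Fˣ) : symbol c 1 = 0 := by
  simp [symbol]

lemma symbol_inv_left (a c : Fˣ) : symbol a⁻¹ c = -symbol a c := by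
  rw [eq_neg_iff_add_eq_zero, ← symbol_mul_left, inv_mul_cancel, symbol_one_left]

lemma symbol_inv_right (a c : Fˣ) : symbol a c⁻¹ = -symbol a c := by
  rw [eq_neg_iff_add_eq_zero, ← symbol_mul_right, inv_mul_cancel, symbol_one_right]

lemma symbol_eq_zero_of_add_eq_one {a b : Fˣ} (h : (a : F) + b = 1) : symbol a b = 0 :=
  (Submodule.Quotient.mk_eq_zero _).2 (Submodule.subset_span ⟨a, b, h, rfl⟩)

lemma symbol_neg_self (a : Fˣ) : symbol a (-a) = 0 := by
  by_cases ha : a = 1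
  · rw [ha, symbol_one_left]
  have ha' : (a : F) ≠ 1 := fun h => ha (Units.ext h)
  have h₁ : (1 : F) - a ≠ 0 := sub_ne_zero.2 ha'.symm
  have h₂ : (1 : F) - (a : F)⁻¹ ≠ 0 := sub_ne_zero.2 fun h => ha' (inv_eq_one.1 h.symm)
  have e₁ : symbol a (Units.mk0 _ h₁) = 0 := symbol_eq_zero_of_add_eq_one (by simp)
  have e₂ : symbol a⁻¹ (Units.mk0 _ h₂) = 0 := symbol_eq_zero_of_add_eq_one (by simp)
  have neg_eq_div : -a = Units.mk0 _ h₁ * (Units.mk0 _ h₂)⁻¹ := by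
    rw [eq_mul_inv_iff_mul_eq]
    ext
    simp only [Units.val_mul, Units.val_neg, Units.val_mk0]
    field_simp
    ring
  rw [symbol_inv_left, neg_eq_zero] at e₂
  rw [neg_eq_div, symbol_mul_right, symbol_inv_right, e₁, e₂, neg_zero, add_zero]

lemma symbol_swap (a b : Fˣ) : symbol a b = -symbol b a := by
  have h := symbol_neg_self (a * b)
  have h₁ : symbol a (-(a * b)) = symbol a b := by
    rw [← neg_mul, symbol_mul_right, symbol_neg_self, zero_add]
  have h₂ : symbol b (-(a * b)) = symbol b a := by
    rw [← mul_neg, symbol_mul_right, symbol_neg_self, add_zero]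
  rw [symbol_mul_left, h₁, h₂] at h
  exact eq_neg_of_add_eq_zero_left h

lemma symbol_self (a : Fˣ) : symbol a a = symbol (-1) a := by
  have h := symbol_neg_self a
  rw [← neg_one_mul, symbol_mul_right] at h
  rw [symbol_swap (-1) a]
  exact eq_neg_of_add_eq_zero_right h

/-- The subgroup `{u | {u, b} ∈ N}` of `Fˣ`. -/
def symbolPreimage (N : AddSubgroup (K2 F)) (b : Fˣ) : Subgroup Fˣ where
  carrier := {u | symbol u b ∈ N}
  one_mem' := by simp [symbol_one_left]
  mul_mem' hu hv := by simpa only [Set.mem_ofPred_eq, symbol_mul_left] using N.add_mem hu hv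
  inv_mem' hu := by simpa only [Set.mem_ofPred_eq, symbol_inv_left] using N.neg_mem hu

/-- The subgroup `{U, b}` of `K₂(F)` formed by the symbols `{u, b}` with `u ∈ U`. -/
def symbolImage (U : Subgroup Fˣ) (b : Fˣ) : AddSubgroup (K2 F) where
  carrier := {x | ∃ u ∈ U, symbol u b = x}
  zero_mem' := ⟨1, U.one_mem, symbol_one_left b⟩
  add_mem' := by
    rintro _ _ ⟨u, hu, rfl⟩ ⟨v, hv, rfl⟩
    exact ⟨u * v, U.mul_mem hu hv, symbol_mul_left u v b⟩
  neg_mem' := by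
    rintro _ ⟨u, hu, rfl⟩
    exact ⟨u⁻¹, U.inv_mem hu, symbol_inv_left u b⟩

lemma mem_symbolPreimage {N : AddSubgroup (K2 F)} {u b : Fˣ} :
    u ∈ symbolPreimage N b ↔ symbol u b ∈ N := Iff.rfl

lemma symbol_mem_comm {N : AddSubgroup (K2 F)} {a b : Fˣ} :
    symbol a b ∈ N ↔ symbol b a ∈ N := by
  rw [symbol_swap, N.neg_mem_iff]

lemma symbol_mem_of_mem_closure {N : AddSubgroup (K2 F)} {S : Set Fˣ}
    (h : ∀ a ∈ S, ∀ b ∈ S, symbol a b ∈ N) {a b : Fˣ} (ha : a ∈ Subgroup.closure S)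
    (hb : b ∈ Subgroup.closure S) : symbol a b ∈ N := by
  have closure_le : ∀ c ∈ S, Subgroup.closure S ≤ symbolPreimage N c := fun c hc =>
    (Subgroup.closure_le _).2 fun a ha => h a ha c hc
  refine (Subgroup.closure_le (symbolPreimage N b)).2 (fun c hc => ?_) ha
  exact symbol_mem_comm.1 (closure_le c hc hb)

lemma K2_eq_top_of_forall_symbol_mem {N : AddSubgroup (K2 F)} (h : ∀ a b : Fˣ, symbol a b ∈ N) :
    N = ⊤ := by
  refine (AddSubgroup.eq_top_iff' N).2 fun x => ?_
  obtain ⟨y, rfl⟩ := Submodule.Quotient.mk_surjective _ x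
  induction y using TensorProduct.induction_on with
  | zero => exact N.zero_mem
  | tmul a b => exact h a.toMul b.toMul
  | add y z hy hz => exact N.add_mem hy hz

end MilnorK2

section Dimension

open Module

variable {k K : Type*} [Field k] [Field K] [Algebra k K]

lemma finrank_map_mulLeft {a : K} (ha : a ≠ 0) (V : Submodule k K) :
    finrank k (V.map (LinearMap.mulLeft k a)) = finrank k V :=
  (Submodule.equivMapOfInjective _ (mul_right_injective₀ ha) V).finrank_eq.symm

variable [FiniteDimensional k K]

lemma finrank_add_finrank_le_finrank_inf_mulLeft_add (V W : Submodule k K) {a : K} (ha : a ≠ 0) :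
    finrank k V + finrank k W ≤
      finrank k (V ⊓ W.map (LinearMap.mulLeft k a) : Submodule k K) + finrank k K := by
  have h := Submodule.finrank_sup_add_finrank_inf_eq V (W.map (LinearMap.mulLeft k a))
  have h' := Submodule.finrank_le (V ⊔ W.map (LinearMap.mulLeft k a))
  rw [finrank_map_mulLeft ha] at h
  omega

lemma exists_mem_mul_mem {V W : Submodule k K} (h : finrank k K < finrank k V + finrank k W)
    {a : K} (ha : a ≠ 0) : ∃ y ∈ W, y ≠ 0 ∧ a * y ∈ V := by
  have hne : V ⊓ W.map (LinearMap.mulLeft k a) ≠ ⊥ := by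
    rw [← Submodule.one_le_finrank_iff]
    have := finrank_add_finrank_le_finrank_inf_mulLeft_add V W ha
    omega
  obtain ⟨_, ⟨hV, y, hy, rfl⟩, h0⟩ := Submodule.exists_mem_ne_zero_of_ne_bot hne
  exact ⟨y, hy, right_ne_zero_of_mul h0, hV⟩

lemma exists_mem_mul_mem_mul_mul_mem {V : Submodule k K}
    (h : 2 * finrank k K < 3 * finrank k V) {a b : K} (ha : a ≠ 0) (hb : b ≠ 0) :
    ∃ z ∈ V, z ≠ 0 ∧ b * z ∈ V ∧ a * (b * z) ∈ V := by
  have h' := finrank_add_finrank_le_finrank_inf_mulLeft_add V V hb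
  obtain ⟨_, ⟨hbz, z, hz, rfl⟩, h0, hV⟩ :=
    exists_mem_mul_mem (V := V) (W := V ⊓ V.map (LinearMap.mulLeft k b)) (by omega) ha
  exact ⟨z, hz, right_ne_zero_of_mul h0, hbz, hV⟩

end Dimension

section Coproduct

variable {ι : Type*}

lemma exists_finsupp_sum_eq_of_mem_iSup {A : Type*} [AddCommGroup A] {N : ι → AddSubgroup A}
    {x : A} (hx : x ∈ ⨆ i, N i) : ∃ f : ι →₀ A, (∀ i, f i ∈ N i) ∧ f.sum (fun _ a => a) = x := by
  have hx' : x ∈ ⨆ i, AddSubgroup.toIntSubmodule (N i) := by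
    rwa [← AddSubgroup.toIntSubmodule.map_iSup]
  exact (Submodule.mem_iSup_iff_exists_finsupp _ _).1 hx'

variable (M : ι → Type*) [∀ i, AddCommGroup (M i)]

/-- The subgroup `∐_{i ∈ S} M i` of the coproduct `∐_i M i`. -/
def supportedOn (S : Set ι) : AddSubgroup (Π₀ i, M i) where
  carrier := {y | ∀ i ∉ S, y i = 0}
  zero_mem' _ _ := rfl
  add_mem' hx hy i hi := by rw [DFinsupp.add_apply, hx i hi, hy i hi, add_zero]
  neg_mem' hx i hi := by rw [DFinsupp.neg_apply, hx i hi, neg_zero]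

variable {M}

lemma supportedOn_mono {S S' : Set ι} (h : S ⊆ S') : supportedOn M S ≤ supportedOn M S' :=
  fun _ hy i hi => hy i fun hS => hi (h hS)

lemma exists_sub_mem_supportedOn {S : Set ι} {N : AddSubgroup (Π₀ i, M i)} {y : Π₀ i, M i}
    (hy : y ∈ N ⊔ supportedOn M S) : ∃ x ∈ N, y - x ∈ supportedOn M S := by
  obtain ⟨x, hx, z, hz, rfl⟩ := AddSubgroup.mem_sup.1 hy
  exact ⟨x, hx, by rwa [add_sub_cancel_left]⟩

lemma single_mem_supportedOn [DecidableEq ι] {S : Set ι} {i : ι} (hi : i ∈ S) (m : M i) :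
    DFinsupp.single i m ∈ supportedOn M S := fun _ hj =>
  DFinsupp.single_eq_of_ne fun h => hj (h ▸ hi)

lemma supportedOn_le_of_single_mem [DecidableEq ι] {S : Set ι} {N : AddSubgroup (Π₀ i, M i)}
    (h : ∀ i ∈ S, ∀ m, DFinsupp.single i m ∈ N) : supportedOn M S ≤ N := by
  classical
  intro y hy
  rw [← DFinsupp.sum_single (f := y)]
  refine sum_mem fun i hi => h i ?_ _
  by_contra hiS
  exact DFinsupp.mem_support_iff.1 hi (hy i hiS)

end Coproduct

section Divisors

open Finsupp Module

variable {k : Type*} [Field k] {Pt : Type*} {res : Pt → Type*}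
  [∀ P, Field (res P)] [∀ P, Algebra k (res P)]

lemma divDeg_eq_sum (D : Pt →₀ ℤ) :
    divDeg k res D = D.sum fun P n => (finrank k (res P) : ℤ) * n := by
  refine finsum_eq_sum_of_support_subset _ fun P hP => ?_
  simpa using right_ne_zero_of_mul hP

lemma divDeg_add (D E : Pt →₀ ℤ) : divDeg k res (D + E) = divDeg k res D + divDeg k res E := by
  simp only [divDeg_eq_sum]
  exact Finsupp.sum_add_index' (by simp) (by intros; ring)

lemma divDeg_sub (D E : Pt →₀ ℤ) : divDeg k res (D - E) = divDeg k res D - divDeg k res E := by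
  rw [eq_sub_iff_add_eq, ← divDeg_add, sub_add_cancel]

lemma divDeg_single (P : Pt) (n : ℤ) : divDeg k res (single P n) = finrank k (res P) * n := by
  rw [divDeg_eq_sum, Finsupp.sum_single_index (by simp)]

lemma divDeg_nonneg {D : Pt →₀ ℤ} (hD : 0 ≤ D) : 0 ≤ divDeg k res D := by
  rw [divDeg_eq_sum]
  exact Finset.sum_nonneg fun P _ => mul_nonneg (by positivity) (hD P)

lemma single_one_le {D : Pt →₀ ℤ} (hD : 0 ≤ D) {P : Pt} (hP : 0 < D P) : single P 1 ≤ D := by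
  classical
  intro Q
  rw [Finsupp.single_apply]
  split_ifs with h
  · exact h ▸ hP
  · exact hD Q

lemma finrank_le_divDeg {D : Pt →₀ ℤ} (hD : 0 ≤ D) {P : Pt} (hP : D P ≠ 0) :
    (finrank k (res P) : ℤ) ≤ divDeg k res D := by
  have hsub := sub_nonneg.2 (single_one_le hD (lt_of_le_of_ne (hD P) hP.symm))
  have := divDeg_nonneg (k := k) (res := res) hsub
  rw [divDeg_sub, divDeg_single] at this
  linarith

lemma supported_induction {S : Set Pt} {p : (Pt →₀ ℤ) → Prop} (zero : p 0)
    (single : ∀ P ∈ S, p (single P 1)) (add : ∀ D E, p D → p E → p (D + E))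
    (neg : ∀ D, p D → p (-D)) {D : Pt →₀ ℤ} (hD : D ∈ supported ℤ ℤ S) : p D := by
  rw [supported_eq_span_single, ← Submodule.mem_toAddSubgroup,
    Submodule.span_int_eq_addSubgroupClosure] at hD
  induction hD using AddSubgroup.closure_induction with
  | zero => exact zero
  | mem D hD =>
    obtain ⟨P, hP, rfl⟩ := hD
    exact single P hP
  | add D E _ _ hD hE => exact add D E hD hE
  | neg D _ hD => exact neg D hD

variable (k res) in
/-- The set `{O} ∪ C_{≤ n}` of closed points. -/
def pointsLE (O : Pt) (n : ℕ) : Set Pt :=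
  {P | P = O ∨ finrank k (res P) ≤ n}

lemma notMem_pointsLE {O P : Pt} {n : ℕ} :
    P ∉ pointsLE k res O n ↔ P ≠ O ∧ n < finrank k (res P) := by
  simp [pointsLE]

lemma pointsLE_mono {O : Pt} {m n : ℕ} (h : m ≤ n) : pointsLE k res O m ⊆ pointsLE k res O n :=
  fun _ => Or.imp_right fun hP => hP.trans h

lemma mem_supported_pointsLE {D : Pt →₀ ℤ} (hD : 0 ≤ D) {n : ℕ} (hn : divDeg k res D ≤ n)
    (O : Pt) : D ∈ supported ℤ ℤ (pointsLE k res O n) := by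
  refine fun P hP => Or.inr ?_
  have := finrank_le_divDeg (k := k) (res := res) hD (Finsupp.mem_support_iff.1 hP)
  omega

lemma single_mem_supported_pointsLE (O : Pt) (n : ℕ) (m : ℤ) :
    single O m ∈ supported ℤ ℤ (pointsLE k res O n) :=
  single_mem_supported ℤ m (Or.inl rfl)

lemma Fsub_mono {F : Type*} [Field F] {ord : Pt → F → ℤ} {m n : ℕ} (h : m ≤ n) :
    Fsub k res ord m ≤ Fsub k res ord n := by
  apply AddSubgroup.closure_mono
  rintro _ ⟨f, g, hf, hg, rfl⟩
  exact ⟨f, g, fun P hP => (hf P hP).trans h, fun P hP => (hg P hP).trans h, rfl⟩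

end Divisors

namespace IsProjCurve

open Finsupp Module

variable {k F : Type*} [Field k] [Field F] [Algebra k F] {Pt : Type*} {res : Pt → Type*}
  [∀ P, Field (res P)] [∀ P, Algebra k (res P)] {ord : Pt → F → ℤ} {ev : ∀ P, F → res P}
  {L : (Pt →₀ ℤ) → Submodule k F} {t : ℕ} (hC : IsProjCurve k F res ord ev L t)

/-- The divisor of a nonzero function. -/
def divisor (f : Fˣ) : Pt →₀ ℤ :=
  Finsupp.ofSupportFinite (fun P => ord P (f : F)) (hC.support_finite f f.ne_zero)

lemma divisor_apply (f : Fˣ) (P : Pt) : hC.divisor f P = ord P (f : F) := rfl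

lemma divisor_mul (f g : Fˣ) : hC.divisor (f * g) = hC.divisor f + hC.divisor g :=
  Finsupp.ext fun P => hC.ord_mul P f g f.ne_zero g.ne_zero

lemma divisor_one : hC.divisor 1 = 0 := by
  simpa using hC.divisor_mul 1 1

lemma divisor_inv (f : Fˣ) : hC.divisor f⁻¹ = -hC.divisor f := by
  rw [eq_neg_iff_add_eq_zero, ← divisor_mul, inv_mul_cancel, divisor_one]

lemma divisor_div (f g : Fˣ) : hC.divisor (f / g) = hC.divisor f - hC.divisor g := by
  rw [div_eq_mul_inv, divisor_mul, divisor_inv, sub_eq_add_neg]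

lemma divDeg_divisor (f : Fˣ) : divDeg k res (hC.divisor f) = 0 :=
  hC.degree_formula f f.ne_zero

section RiemannRochSpaces

variable {D E : Pt →₀ ℤ} {P : Pt}

lemma mem_L_iff {f : Fˣ} : (f : F) ∈ L D ↔ 0 ≤ D + hC.divisor f := by
  rw [hC.mem_L]
  exact ⟨fun h P => h f.ne_zero P, fun h _ P => h P⟩

lemma L_mono (hC : IsProjCurve k F res ord ev L t) (h : D ≤ E) : L D ≤ L E := by
  intro f hf
  rw [hC.mem_L] at hf ⊢
  exact fun h0 P => (hf h0 P).trans (add_le_add_left (h P) _)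

lemma L_single_mono (hC : IsProjCurve k F res ord ev L t) (O : Pt) {m n : ℤ} (h : m ≤ n) :
    L (single O m) ≤ L (single O n) :=
  hC.L_mono (Finsupp.single_le_single.2 h)

lemma mul_mem_L (hC : IsProjCurve k F res ord ev L t) {f g : Fˣ} (hf : (f : F) ∈ L D)
    (hg : (g : F) ∈ L E) : ((f * g : Fˣ) : F) ∈ L (D + E) := by
  rw [hC.mem_L_iff] at hf hg ⊢
  rw [hC.divisor_mul, add_add_add_comm]
  exact add_nonneg hf hg

lemma one_mem_L (hC : IsProjCurve k F res ord ev L t) (hD : 0 ≤ D) : ((1 : Fˣ) : F) ∈ L D := by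
  rwa [hC.mem_L_iff, hC.divisor_one, add_zero]

lemma ord_nonneg_of_mem_L (hC : IsProjCurve k F res ord ev L t) (hDP : D P = 0) {f : F}
    (hf : f ∈ L D) (h0 : f ≠ 0) : 0 ≤ ord P f := by
  simpa [hDP] using (hC.mem_L D f).1 hf h0 P

lemma ord_eq_zero_of_mem_L (hC : IsProjCurve k F res ord ev L t) (hDP : D P = 0)
    (hdeg : divDeg k res D < finrank k (res P)) {f : Fˣ} (hf : (f : F) ∈ L D) :
    ord P (f : F) = 0 := by
  by_contra hord
  have := finrank_le_divDeg (k := k) (res := res) (hC.mem_L_iff.1 hf) (P := P)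
    (by rwa [Finsupp.add_apply, hDP, zero_add])
  rw [divDeg_add, hC.divDeg_divisor] at this
  omega

/-- By Riemann–Roch, the divisor `(deg A + t) O - A` of degree `t` has a nonzero section. -/
lemma exists_divisor_eq {O : Pt} (hO : finrank k (res O) = 1) (A : Pt →₀ ℤ) :
    ∃ (f : Fˣ) (E : Pt →₀ ℤ), 0 ≤ E ∧ divDeg k res E = t ∧
      hC.divisor f = A + E - single O (divDeg k res A + t) := by
  set D := single O (divDeg k res A + t) - A with hD
  have hdeg : divDeg k res D = t := by
    rw [hD, divDeg_sub, divDeg_single, hO]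
    push_cast
    ring
  have hne : L D ≠ ⊥ := by
    have := hC.finiteDimensional_L D
    have := hC.rr_ineq D
    rw [← Submodule.one_le_finrank_iff]
    omega
  obtain ⟨f, hf, hf0⟩ := (L D).exists_mem_ne_zero_of_ne_bot hne
  refine ⟨Units.mk0 f hf0, D + hC.divisor (Units.mk0 f hf0), hC.mem_L_iff.1 hf, ?_, ?_⟩
  · rw [divDeg_add, hdeg, hC.divDeg_divisor, add_zero]
  · rw [hD]
    abel

end RiemannRochSpaces

section SUnits

variable {S : Set Pt} {O : Pt} {n : ℕ}

/-- The group of `S`-units: the functions whose divisor is supported on `S`. -/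
def sUnits (S : Set Pt) : Subgroup Fˣ where
  carrier := {f | hC.divisor f ∈ supported ℤ ℤ S}
  one_mem' := by simp [divisor_one]
  mul_mem' hf hg := by simpa only [Set.mem_ofPred_eq, divisor_mul] using add_mem hf hg
  inv_mem' hf := by simpa only [Set.mem_ofPred_eq, divisor_inv] using neg_mem hf

lemma mem_sUnits {f : Fˣ} : f ∈ hC.sUnits S ↔ hC.divisor f ∈ supported ℤ ℤ S := Iff.rfl

lemma mem_sUnits_iff_ord {f : Fˣ} : f ∈ hC.sUnits S ↔ ∀ P ∉ S, ord P (f : F) = 0 :=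
  mem_supported' ℤ _

lemma neg_one_mem_sUnits (S : Set Pt) : (-1 : Fˣ) ∈ hC.sUnits S :=
  hC.mem_sUnits_iff_ord.2 fun P _ => by simpa using hC.ord_algebraMap P (-1) (by simp)

/-- The group `U_n` of functions whose divisor is supported on `{O} ∪ C_{≤ n}`. -/
abbrev unitsLE (O : Pt) (n : ℕ) : Subgroup Fˣ := hC.sUnits (pointsLE k res O n)

lemma mem_unitsLE_of_mem_L (hO : finrank k (res O) = 1) {m : ℤ} (hm : m ≤ n) {f : Fˣ}
    (hf : (f : F) ∈ L (single O m)) : f ∈ hC.unitsLE O n := by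
  have heff := mem_supported_pointsLE (k := k) (res := res) (hC.mem_L_iff.1 hf) (n := n) (by
    rw [divDeg_add, divDeg_single, hC.divDeg_divisor, hO]
    omega) O
  exact (Submodule.add_mem_iff_right _ (single_mem_supported_pointsLE O n m)).1 heff

lemma finrank_le_of_mem_unitsLE (hO : finrank k (res O) = 1) {f : Fˣ} (hf : f ∈ hC.unitsLE O n)
    {P : Pt} (hP : ord P (f : F) ≠ 0) : finrank k (res P) ≤ n := by
  rcases hf (Finsupp.mem_support_iff.2 hP) with rfl | hdeg
  · rw [hO, Nat.one_le_iff_ne_zero]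
    rintro rfl
    have support_subset : (hC.divisor f).support ⊆ {P} := fun Q hQ => by
      have := hC.finiteDimensional_res Q
      exact Finset.mem_singleton.2 ((hf hQ).resolve_right finrank_pos.not_ge)
    have hdeg := hC.divDeg_divisor f
    rw [Finsupp.support_subset_singleton.1 support_subset, divDeg_single, hO] at hdeg
    exact hP (by simpa [divisor_apply] using hdeg)
  · exact hdeg

lemma symbol_mem_Fsub (hO : finrank k (res O) = 1) {f g : Fˣ} (hf : f ∈ hC.unitsLE O n)
    (hg : g ∈ hC.unitsLE O n) : symbol f g ∈ Fsub k res ord n :=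
  AddSubgroup.subset_closure ⟨f, g, fun _ => hC.finrank_le_of_mem_unitsLE hO hf,
    fun _ => hC.finrank_le_of_mem_unitsLE hO hg, rfl⟩

end SUnits

section Generators

variable {O : Pt} {n : ℕ} {G : Subgroup Fˣ}

/-- The divisors that are congruent to an effective divisor of degree at most `m`, modulo the
multiples of `O` and the divisors of functions in `G`. -/
def effectiveModulo (G : Subgroup Fˣ) (O : Pt) (m : ℕ) : Set (Pt →₀ ℤ) :=
  {A | ∃ f ∈ G, ∃ (E : Pt →₀ ℤ) (j : ℤ), 0 ≤ E ∧ divDeg k res E ≤ m ∧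
    hC.divisor f = A - E + single O j}

lemma mem_effectiveModulo_of_nonneg (G : Subgroup Fˣ) (O : Pt) {A : Pt →₀ ℤ} (hA : 0 ≤ A) {m : ℕ}
    (hm : divDeg k res A ≤ m) : A ∈ hC.effectiveModulo G O m :=
  ⟨1, G.one_mem, A, 0, hA, hm, by simp [divisor_one]⟩

lemma single_mem_effectiveModulo (G : Subgroup Fˣ) (O : Pt) (j : ℤ) (m : ℕ) :
    single O j ∈ hC.effectiveModulo G O m :=
  ⟨1, G.one_mem, 0, -j, le_rfl, by simp [divDeg], by simp [divisor_one]⟩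

lemma add_mem_effectiveModulo {a b : ℕ} {A B : Pt →₀ ℤ} (hA : A ∈ hC.effectiveModulo G O a)
    (hB : B ∈ hC.effectiveModulo G O b) : A + B ∈ hC.effectiveModulo G O (a + b) := by
  obtain ⟨f, hf, D, i, hD, hDa, hdivf⟩ := hA
  obtain ⟨g, hg, E, j, hE, hEb, hdivg⟩ := hB
  refine ⟨f * g, G.mul_mem hf hg, D + E, i + j, add_nonneg hD hE, ?_, ?_⟩
  · rw [divDeg_add]
    push_cast
    linarith
  · rw [divisor_mul, hdivf, hdivg, single_add]
    abel

lemma neg_mem_effectiveModulo (hO : finrank k (res O) = 1)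
    (hG : ∀ f ∈ hC.unitsLE O n, (f : F) ∈ L (single O (n + t : ℤ)) → f ∈ G)
    (ht : t ≤ n) {m : ℕ} (hm : m ≤ n) {A : Pt →₀ ℤ}
    (hA : A ∈ hC.effectiveModulo G O m) : -A ∈ hC.effectiveModulo G O t := by
  obtain ⟨f, hf, E, j, hE, hEm, hdivf⟩ := hA
  obtain ⟨g, E', hE', hE't, hdivg⟩ := hC.exists_divisor_eq hO E
  have hgU : g ∈ hC.unitsLE O n := by
    rw [mem_sUnits, hdivg]
    exact sub_mem (add_mem (mem_supported_pointsLE hE (by omega) O)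
      (mem_supported_pointsLE hE' (by omega) O)) (single_mem_supported_pointsLE O n _)
  have hgL : (g : F) ∈ L (single O (n + t : ℤ)) := by
    refine hC.L_single_mono O (show divDeg k res E + t ≤ n + t by omega) ?_
    rw [hC.mem_L_iff, hdivg, add_sub_cancel]
    exact add_nonneg hE hE'
  refine ⟨(f * g)⁻¹, G.inv_mem (G.mul_mem hf (hG g hgU hgL)), E', divDeg k res E + t - j, hE',
    hE't.le, ?_⟩
  rw [divisor_inv, divisor_mul, hdivf, hdivg, single_sub]
  abel

lemma mem_effectiveModulo_of_mem_supported (hO : finrank k (res O) = 1)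
    (hG : ∀ f ∈ hC.unitsLE O n, (f : F) ∈ L (single O (n + t : ℤ)) → f ∈ G)
    (hn : 2 * t ≤ n) {A : Pt →₀ ℤ}
    (hA : A ∈ supported ℤ ℤ (pointsLE k res O n)) : A ∈ hC.effectiveModulo G O t := by
  have neg_mem {m : ℕ} (hm : m ≤ n) {A : Pt →₀ ℤ} (hA : A ∈ hC.effectiveModulo G O m) :=
    hC.neg_mem_effectiveModulo hO hG (by omega) hm hA
  have descent {m : ℕ} (hm : m ≤ n) {A : Pt →₀ ℤ} (hA : A ∈ hC.effectiveModulo G O m) :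
      A ∈ hC.effectiveModulo G O t :=
    neg_neg A ▸ neg_mem (by omega) (neg_mem hm hA)
  refine supported_induction ?zero ?single ?add ?neg hA
  case zero => exact hC.mem_effectiveModulo_of_nonneg G O le_rfl (by simp [divDeg])
  case single =>
    rintro P (rfl | hP)
    · exact hC.single_mem_effectiveModulo G P 1 t
    · refine descent le_rfl (hC.mem_effectiveModulo_of_nonneg G O (by simp) ?_)
      simpa [divDeg_single] using hP
  case add => exact fun D E hD hE => descent (by omega) (hC.add_mem_effectiveModulo hD hE)
  case neg => exact fun D hD => neg_mem (by omega) hD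

lemma unitsLE_le_of_mem_L (hO : finrank k (res O) = 1)
    (hG : ∀ f ∈ hC.unitsLE O n, (f : F) ∈ L (single O (n + t : ℤ)) → f ∈ G)
    (hn : 2 * t ≤ n) : hC.unitsLE O n ≤ G := by
  intro u hu
  obtain ⟨f, hf, E, j, hE, hEt, hdivf⟩ := hC.mem_effectiveModulo_of_mem_supported hO hG hn hu
  have hdiv : hC.divisor (u / f) = E - single O j := by
    rw [divisor_div, hdivf]
    abel
  have hj : j = divDeg k res E := by
    have hdeg := hC.divDeg_divisor (u / f)
    rw [hdiv, divDeg_sub, divDeg_single, hO] at hdeg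
    push_cast at hdeg
    omega
  have huf : u / f ∈ G := by
    refine hG _ ?_ (hC.L_single_mono O (show j ≤ n + t by omega) ?_)
    · rw [mem_sUnits, hdiv]
      exact sub_mem (mem_supported_pointsLE hE (by omega) O) (single_mem_supported_pointsLE O n j)
    · rwa [hC.mem_L_iff, hdiv, add_sub_cancel]
  simpa only [div_mul_cancel] using G.mul_mem huf hf

end Generators

lemma sUnits_le_closure {S S' : Set Pt} {π : Pt → Fˣ}
    (hπ : ∀ P ∈ S' \ S, hC.divisor (π P) - single P 1 ∈ supported ℤ ℤ S) :
    hC.sUnits S' ≤ Subgroup.closure (hC.sUnits S ∪ π '' (S' \ S)) := by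
  set H := Subgroup.closure ((hC.sUnits S : Set Fˣ) ∪ π '' (S' \ S))
  have exists_divisor_sub_mem {D : Pt →₀ ℤ} (hD : D ∈ supported ℤ ℤ S') :
      ∃ v ∈ H, hC.divisor v - D ∈ supported ℤ ℤ S := by
    refine supported_induction (p := fun D => ∃ v ∈ H, hC.divisor v - D ∈ supported ℤ ℤ S)
      ?zero ?single ?add ?neg hD
    case zero => exact ⟨1, H.one_mem, by simp [divisor_one]⟩
    case single =>
      intro P hP
      by_cases hPS : P ∈ S
      · exact ⟨1, H.one_mem, by simpa [divisor_one] using single_mem_supported ℤ 1 hPS⟩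
      · exact ⟨π P, Subgroup.subset_closure (Or.inr ⟨P, ⟨hP, hPS⟩, rfl⟩), hπ P ⟨hP, hPS⟩⟩
    case add =>
      rintro D E ⟨v, hv, hvD⟩ ⟨w, hw, hwE⟩
      refine ⟨v * w, H.mul_mem hv hw, ?_⟩
      rw [divisor_mul, add_sub_add_comm]
      exact add_mem hvD hwE
    case neg =>
      rintro D ⟨v, hv, hvD⟩
      refine ⟨v⁻¹, H.inv_mem hv, ?_⟩
      rw [divisor_inv, ← neg_sub']
      exact neg_mem hvD
  intro u hu
  obtain ⟨v, hv, hvu⟩ := exists_divisor_sub_mem hu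
  rw [← divisor_div] at hvu
  have hvuH : v / u ∈ H := Subgroup.subset_closure (Or.inl hvu)
  simpa only [div_div_cancel] using H.div_mem hv hvuH

section Uniformizers

variable {O P : Pt} {n : ℕ} {π : Fˣ}

/-- `π` is a uniformizer at a point `P ≠ O` of degree `n + 1` whose remaining zeros and poles lie
in `{O} ∪ C_{≤ n}`, with its only pole, of order at most `n + 1 + t`, at `O`. -/
structure IsUniformizer (O P : Pt) (n : ℕ) (π : Fˣ) : Prop where
  ne : P ≠ O
  finrank_eq : finrank k (res P) = n + 1
  divisor_sub_single_mem : hC.divisor π - single P 1 ∈ supported ℤ ℤ (pointsLE k res O n)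
  mem_L : (π : F) ∈ L (single O (n + 1 + t : ℤ))

lemma exists_isUniformizer (hO : finrank k (res O) = 1) (ht : t ≤ n) (hP : P ≠ O)
    (hPn : finrank k (res P) = n + 1) : ∃ π, hC.IsUniformizer O P n π := by
  obtain ⟨π, E, hE, hEt, hdiv⟩ := hC.exists_divisor_eq hO (single P 1)
  refine ⟨π, hP, hPn, ?_, ?_⟩
  · rw [hdiv, add_sub_assoc, add_sub_cancel_left]
    exact sub_mem (mem_supported_pointsLE hE (by omega) O) (single_mem_supported_pointsLE O n _)
  · have hdeg : divDeg k res (single P 1) = n + 1 := by simp [divDeg_single, hPn]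
    rw [hC.mem_L_iff, hdiv, hdeg, add_sub_cancel]
    exact add_nonneg (by simp) hE

namespace IsUniformizer

variable {hC}

lemma notMem (hπ : hC.IsUniformizer O P n π) : P ∉ pointsLE k res O n :=
  notMem_pointsLE.2 ⟨hπ.ne, by rw [hπ.finrank_eq]; omega⟩

lemma ord_self (hπ : hC.IsUniformizer O P n π) : ord P (π : F) = 1 := by
  have := (mem_supported' ℤ _).1 hπ.divisor_sub_single_mem P hπ.notMem
  rwa [Finsupp.sub_apply, single_eq_same, sub_eq_zero] at this

lemma ord_of_ne (hπ : hC.IsUniformizer O P n π) {Q : Pt} (hQP : Q ≠ P)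
    (hQ : Q ∉ pointsLE k res O n) : ord Q (π : F) = 0 := by
  have := (mem_supported' ℤ _).1 hπ.divisor_sub_single_mem Q hQ
  rwa [Finsupp.sub_apply, single_eq_of_ne hQP, sub_zero] at this

lemma div_mem_unitsLE (hπ : hC.IsUniformizer O P n π) (hO : finrank k (res O) = 1) {w : Fˣ}
    (hw : (w : F) ∈ L (single O (2 * n + 1 : ℤ))) (hord : 0 < ord P (w : F)) :
    w / π ∈ hC.unitsLE O n := by
  have hpos : 0 < (single O (2 * n + 1 : ℤ) + hC.divisor w) P := by
    rwa [Finsupp.add_apply, single_eq_of_ne hπ.ne, zero_add]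
  set D := single O (2 * n + 1 : ℤ) + hC.divisor w - single P 1 with hD
  have hDnonneg : 0 ≤ D := sub_nonneg.2 (single_one_le (hC.mem_L_iff.1 hw) hpos)
  have hDdeg : divDeg k res D = n := by
    rw [hD, divDeg_sub, divDeg_add, hC.divDeg_divisor, divDeg_single, divDeg_single, hO,
      hπ.finrank_eq]
    push_cast
    ring
  have hdiv : hC.divisor (w / π) =
      D - single O (2 * n + 1 : ℤ) - (hC.divisor π - single P 1) := by
    rw [hD, divisor_div]
    abel
  rw [mem_sUnits, hdiv]
  exact sub_mem (sub_mem (mem_supported_pointsLE hDnonneg hDdeg.le O)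
    (single_mem_supported_pointsLE O n _)) hπ.divisor_sub_single_mem

end IsUniformizer

end Uniformizers

section Evaluation

variable {D E : Pt →₀ ℤ} {P : Pt}

/-- Evaluation at `P` on `L D`, for a divisor `D` not involving `P`. -/
def evL (hDP : D P = 0) : L D →ₗ[k] res P where
  toFun f := ev P f
  map_add' f g := by
    by_cases hf : (f : F) = 0
    · simp [hf, hC.ev_zero]
    by_cases hg : (g : F) = 0
    · simp [hg, hC.ev_zero]
    exact hC.ev_add P f g hf hg (hC.ord_nonneg_of_mem_L hDP f.2 hf)
      (hC.ord_nonneg_of_mem_L hDP g.2 hg)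
  map_smul' c f := by
    by_cases hf : (f : F) = 0
    · simp [hf, hC.ev_zero]
    by_cases hc : c = 0
    · simp [hc, hC.ev_zero]
    have hc' : algebraMap k F c ≠ 0 := by simpa using hc
    rw [SetLike.val_smul, Algebra.smul_def, hC.ev_mul P _ f hc' hf (hC.ord_algebraMap P c hc).ge
      (hC.ord_nonneg_of_mem_L hDP f.2 hf), hC.ev_algebraMap, RingHom.id_apply, Algebra.smul_def]

lemma ev_ne_zero (hC : IsProjCurve k F res ord ev L t) {f : Fˣ} (hf : ord P (f : F) = 0) :
    ev P (f : F) ≠ 0 := by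
  rw [ne_eq, hC.ev_eq_zero_iff P f f.ne_zero hf.ge, hf]
  exact lt_irrefl _

lemma ev_units_mul (hC : IsProjCurve k F res ord ev L t) {f g : Fˣ} (hf : 0 ≤ ord P (f : F))
    (hg : 0 ≤ ord P (g : F)) : ev P ((f * g : Fˣ) : F) = ev P (f : F) * ev P (g : F) :=
  hC.ev_mul P f g f.ne_zero g.ne_zero hf hg

lemma ev_units_div (hC : IsProjCurve k F res ord ev L t) {f g : Fˣ} (hf : ord P (f : F) = 0)
    (hg : ord P (g : F) = 0) : ev P ((f / g : Fˣ) : F) = ev P (f : F) / ev P (g : F) := by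
  have hord : 0 ≤ ord P ((f / g : Fˣ) : F) := by
    rw [← hC.divisor_apply, hC.divisor_div, Finsupp.sub_apply, hC.divisor_apply, hC.divisor_apply,
      hf, hg, sub_zero]
  rw [eq_div_iff (hC.ev_ne_zero hg), ← hC.ev_units_mul hord hg.ge, div_mul_cancel]

lemma evL_injective (hDP : D P = 0) (hdeg : divDeg k res D < finrank k (res P)) :
    Function.Injective (hC.evL hDP) := by
  rw [injective_iff_map_eq_zero]
  intro f hf
  by_contra h0
  have h0' : (f : F) ≠ 0 := by simpa using h0
  exact hC.ev_ne_zero (hC.ord_eq_zero_of_mem_L hDP hdeg (f := Units.mk0 _ h0') f.2) hf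

lemma divDeg_lt_finrank_range_evL_add (hDP : D P = 0)
    (hdeg : divDeg k res D < finrank k (res P)) :
    divDeg k res D < finrank k (LinearMap.range (hC.evL hDP)) + t := by
  rw [LinearMap.finrank_range_of_inj (hC.evL_injective hDP hdeg)]
  have := hC.rr_ineq D
  omega

lemma exists_ev_eq_of_mem_range_evL (hDP : D P = 0) {y : res P}
    (hy : y ∈ LinearMap.range (hC.evL hDP)) (h0 : y ≠ 0) :
    ∃ f : Fˣ, (f : F) ∈ L D ∧ ev P (f : F) = y := by
  obtain ⟨f, rfl⟩ := hy
  have hf : (f : F) ≠ 0 := by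
    rintro hf
    exact h0 (by rw [show f = 0 from Subtype.ext hf, map_zero])
  exact ⟨Units.mk0 _ hf, f.2, rfl⟩

lemma exists_ev_eq_mul_ev (hC : IsProjCurve k F res ord ev L t) (hDP : D P = 0) (hEP : E P = 0)
    (hD : divDeg k res D < finrank k (res P)) (hE : divDeg k res E < finrank k (res P))
    (hDE : finrank k (res P) + 2 * (t : ℤ) < divDeg k res D + 1 + (divDeg k res E + 1))
    {a : res P} (ha : a ≠ 0) :
    ∃ f g : Fˣ, (f : F) ∈ L D ∧ (g : F) ∈ L E ∧ ev P (f : F) = a * ev P (g : F) := by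
  have := hC.finiteDimensional_res P
  have hrangeD := hC.divDeg_lt_finrank_range_evL_add hDP hD
  have hrangeE := hC.divDeg_lt_finrank_range_evL_add hEP hE
  obtain ⟨y, hy, hy0, hay⟩ := exists_mem_mul_mem (V := LinearMap.range (hC.evL hDP))
    (W := LinearMap.range (hC.evL hEP)) (by omega) ha
  obtain ⟨f, hf, hfy⟩ := hC.exists_ev_eq_of_mem_range_evL hDP hay (mul_ne_zero ha hy0)
  obtain ⟨g, hg, rfl⟩ := hC.exists_ev_eq_of_mem_range_evL hEP hy hy0
  exact ⟨f, g, hf, hg, hfy⟩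

lemma exists_ev_eq_mul_ev_and_ev_eq_mul_ev (hC : IsProjCurve k F res ord ev L t) (hDP : D P = 0)
    (hD : divDeg k res D < finrank k (res P))
    (h : 2 * finrank k (res P) + 3 * (t : ℤ) < 3 * (divDeg k res D + 1)) {a b : res P}
    (ha : a ≠ 0) (hb : b ≠ 0) :
    ∃ p q r : Fˣ, (p : F) ∈ L D ∧ (q : F) ∈ L D ∧ (r : F) ∈ L D ∧
      ev P (p : F) = a * ev P (q : F) ∧ ev P (q : F) = b * ev P (r : F) := by
  have := hC.finiteDimensional_res P
  have hrange := hC.divDeg_lt_finrank_range_evL_add hDP hD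
  obtain ⟨z, hz, hz0, hbz, habz⟩ := exists_mem_mul_mem_mul_mul_mem
    (V := LinearMap.range (hC.evL hDP)) (by omega) ha hb
  have hbz0 := mul_ne_zero hb hz0
  obtain ⟨p, hp, hpz⟩ := hC.exists_ev_eq_of_mem_range_evL hDP habz (mul_ne_zero ha hbz0)
  obtain ⟨q, hq, hqz⟩ := hC.exists_ev_eq_of_mem_range_evL hDP hbz hbz0
  obtain ⟨r, hr, rfl⟩ := hC.exists_ev_eq_of_mem_range_evL hDP hz hz0
  exact ⟨p, q, r, hp, hq, hr, by rw [hpz, hqz], hqz⟩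

end Evaluation

section SymbolsAtPoint

variable {O P : Pt} {n : ℕ} {π : Fˣ}

lemma mul_mem_L_single (hC : IsProjCurve k F res ord ev L t) {i j m : ℤ} (h : i + j ≤ m)
    {f g : Fˣ} (hf : (f : F) ∈ L (single O i)) (hg : (g : F) ∈ L (single O j)) :
    ((f * g : Fˣ) : F) ∈ L (single O m) :=
  hC.L_single_mono O h (single_add O i j ▸ hC.mul_mem_L hf hg)

lemma one_mem_L_single (hC : IsProjCurve k F res ord ev L t) (O : Pt) (n : ℕ) :
    ((1 : Fˣ) : F) ∈ L (single O (n : ℤ)) :=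
  hC.one_mem_L (by simp)

namespace IsUniformizer

variable {hC}

lemma ord_eq_zero_of_mem_unitsLE (hπ : hC.IsUniformizer O P n π) {u : Fˣ}
    (hu : u ∈ hC.unitsLE O n) : ord P (u : F) = 0 :=
  hC.mem_sUnits_iff_ord.1 hu P hπ.notMem

lemma exists_ev_eq_mul_ev (hπ : hC.IsUniformizer O P n π) (hO : finrank k (res O) = 1)
    (hn : 3 * t ≤ n) {a : res P} (ha : a ≠ 0) :
    ∃ f g : Fˣ, (f : F) ∈ L (single O (n : ℤ)) ∧ (g : F) ∈ L (single O (2 * t : ℤ)) ∧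
      ev P (f : F) = a * ev P (g : F) := by
  apply hC.exists_ev_eq_mul_ev (single_eq_of_ne hπ.ne) (single_eq_of_ne hπ.ne) _ _ _ ha <;>
  · simp only [divDeg_single, hO, hπ.finrank_eq]
    push_cast
    omega

lemma exists_ev_eq_mul_ev_and_ev_eq_mul_ev (hπ : hC.IsUniformizer O P n π)
    (hO : finrank k (res O) = 1) (hn : 3 * t ≤ n) {a b : res P} (ha : a ≠ 0) (hb : b ≠ 0) :
    ∃ p q r : Fˣ, (p : F) ∈ L (single O (n : ℤ)) ∧ (q : F) ∈ L (single O (n : ℤ)) ∧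
      (r : F) ∈ L (single O (n : ℤ)) ∧
      ev P (p : F) = a * ev P (q : F) ∧ ev P (q : F) = b * ev P (r : F) := by
  apply hC.exists_ev_eq_mul_ev_and_ev_eq_mul_ev (single_eq_of_ne hπ.ne) _ _ ha hb <;>
  · simp only [divDeg_single, hO, hπ.finrank_eq]
    push_cast
    omega

/-- The Steinberg relation for `a / b` and `1 - a / b`, where `1 - a / b` vanishes at `P`. -/
lemma exists_symbol_eq_zero (hπ : hC.IsUniformizer O P n π) (hO : finrank k (res O) = 1)
    {a b : Fˣ} (hab : a ≠ b) (ha : (a : F) ∈ L (single O (2 * n + 1 : ℤ)))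
    (hb : (b : F) ∈ L (single O (2 * n + 1 : ℤ))) (he : ev P (a : F) = ev P (b : F)) :
    ∃ h ∈ hC.unitsLE O n, symbol (a / b) (π * (h / b)) = 0 := by
  have hP : single O (2 * n + 1 : ℤ) P = 0 := single_eq_of_ne hπ.ne
  have hne : (b : F) - a ≠ 0 := sub_ne_zero.2 fun h => hab (Units.ext h.symm)
  have hmem := sub_mem hb ha
  have hev : ev P ((b : F) - a) = 0 :=
    ((hC.evL hP).map_sub ⟨b, hb⟩ ⟨a, ha⟩).trans (sub_eq_zero.2 he.symm)
  rw [hC.ev_eq_zero_iff P _ hne (hC.ord_nonneg_of_mem_L hP hmem hne)] at hev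
  refine ⟨Units.mk0 _ hne / π, hπ.div_mem_unitsLE hO hmem hev, symbol_eq_zero_of_add_eq_one ?_⟩
  rw [← mul_div_assoc, mul_div_cancel]
  push_cast
  rw [Units.val_mk0, sub_div, div_self b.ne_zero, add_sub_cancel]

lemma div_mem_symbolPreimage (hπ : hC.IsUniformizer O P n π) (hO : finrank k (res O) = 1)
    {a b : Fˣ} (haU : a ∈ hC.unitsLE O n) (hbU : b ∈ hC.unitsLE O n)
    (ha : (a : F) ∈ L (single O (2 * n + 1 : ℤ)))
    (hb : (b : F) ∈ L (single O (2 * n + 1 : ℤ))) (he : ev P (a : F) = ev P (b : F)) :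
    a / b ∈ symbolPreimage (Fsub k res ord n) π := by
  by_cases hab : a = b
  · rw [hab, div_self']
    exact one_mem _
  obtain ⟨h, hh, hsymbol⟩ := hπ.exists_symbol_eq_zero hO hab ha hb he
  rw [symbol_mul_right] at hsymbol
  rw [mem_symbolPreimage, eq_neg_of_add_eq_zero_left hsymbol]
  exact neg_mem (hC.symbol_mem_Fsub hO (div_mem haU hbU) (div_mem hh hbU))

lemma div_div_div_mem_symbolPreimage (hπ : hC.IsUniformizer O P n π)
    (hO : finrank k (res O) = 1) {f g f' g' : Fˣ}
    (hf : (f : F) ∈ L (single O (n : ℤ))) (hg : (g : F) ∈ L (single O (n : ℤ)))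
    (hf' : (f' : F) ∈ L (single O (n : ℤ))) (hg' : (g' : F) ∈ L (single O (n : ℤ)))
    (he : ev P (f : F) * ev P (g' : F) = ev P (g : F) * ev P (f' : F)) :
    f / g / (f' / g') ∈ symbolPreimage (Fsub k res ord n) π := by
  have mem_unitsLE {u : Fˣ} (hu : (u : F) ∈ L (single O (n : ℤ))) : u ∈ hC.unitsLE O n :=
    hC.mem_unitsLE_of_mem_L hO le_rfl hu
  have ord_nonneg {u : Fˣ} (hu : (u : F) ∈ L (single O (n : ℤ))) : 0 ≤ ord P (u : F) :=
    hC.ord_nonneg_of_mem_L (single_eq_of_ne hπ.ne) hu u.ne_zero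
  rw [div_div_div_eq]
  refine hπ.div_mem_symbolPreimage hO (mul_mem (mem_unitsLE hf) (mem_unitsLE hg'))
    (mul_mem (mem_unitsLE hg) (mem_unitsLE hf')) (hC.mul_mem_L_single (by omega) hf hg')
    (hC.mul_mem_L_single (by omega) hg hf') ?_
  rwa [hC.ev_units_mul (ord_nonneg hf) (ord_nonneg hg'),
    hC.ev_units_mul (ord_nonneg hg) (ord_nonneg hf')]

end IsUniformizer

/-- The functions `u ∈ U_n` for which `{u, π}` agrees modulo `F_n` with some `{f / g, π}`, where
`f` and `g` have poles of order at most `n` at `O` and `u(P) = f(P) / g(P)`. -/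
def congruentToFraction (O P : Pt) (n : ℕ) (π : Fˣ) : Set Fˣ :=
  {u | u ∈ hC.unitsLE O n ∧ ∃ f g : Fˣ, (f : F) ∈ L (single O (n : ℤ)) ∧
    (g : F) ∈ L (single O (n : ℤ)) ∧ ev P (f : F) = ev P (u : F) * ev P (g : F) ∧
    u / (f / g) ∈ symbolPreimage (Fsub k res ord n) π}

lemma one_mem_congruentToFraction (O P : Pt) (n : ℕ) (π : Fˣ) :
    1 ∈ hC.congruentToFraction O P n π :=
  ⟨one_mem _, 1, 1, hC.one_mem_L_single O n, hC.one_mem_L_single O n, by simp [hC.ev_one],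
    by simp only [div_self', one_mem]⟩

namespace IsUniformizer

variable {hC}

lemma inv_mem_congruentToFraction (hπ : hC.IsUniformizer O P n π) {u : Fˣ}
    (hu : u ∈ hC.congruentToFraction O P n π) : u⁻¹ ∈ hC.congruentToFraction O P n π := by
  obtain ⟨huU, f, g, hf, hg, he, hdiv⟩ := hu
  have hev : ev P ((u⁻¹ : Fˣ) : F) * ev P (u : F) = 1 := by
    rw [← hC.ev_units_mul (hπ.ord_eq_zero_of_mem_unitsLE (inv_mem huU)).ge
      (hπ.ord_eq_zero_of_mem_unitsLE huU).ge, inv_mul_cancel, Units.val_one, hC.ev_one]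
  refine ⟨inv_mem huU, g, f, hg, hf, by rw [he, ← mul_assoc, hev, one_mul], ?_⟩
  rw [← inv_div f g, inv_div_inv, ← inv_div]
  exact inv_mem hdiv

lemma mul_mem_congruentToFraction (hπ : hC.IsUniformizer O P n π) (hO : finrank k (res O) = 1)
    (hn : 3 * t ≤ n) {u v : Fˣ} (hu : u ∈ hC.congruentToFraction O P n π)
    (hv : v ∈ hC.congruentToFraction O P n π) : u * v ∈ hC.congruentToFraction O P n π := by
  obtain ⟨huU, f, g, hf, hg, hfg, hu⟩ := hu
  obtain ⟨hvU, f', g', hf', hg', hfg', hv⟩ := hv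
  have hu0 := hπ.ord_eq_zero_of_mem_unitsLE huU
  have hv0 := hπ.ord_eq_zero_of_mem_unitsLE hvU
  obtain ⟨p, q, r, hp, hq, hr, hpq, hqr⟩ :=
    hπ.exists_ev_eq_mul_ev_and_ev_eq_mul_ev hO hn (hC.ev_ne_zero hu0) (hC.ev_ne_zero hv0)
  have hupq : u / (p / q) ∈ symbolPreimage (Fsub k res ord n) π := by
    rw [← div_mul_div_cancel u (f / g)]
    exact mul_mem hu (hπ.div_div_div_mem_symbolPreimage hO hf hg hp hq (by rw [hfg, hpq]; ring))
  have hvqr : v / (q / r) ∈ symbolPreimage (Fsub k res ord n) π := by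
    rw [← div_mul_div_cancel v (f' / g')]
    exact mul_mem hv
      (hπ.div_div_div_mem_symbolPreimage hO hf' hg' hq hr (by rw [hfg', hqr]; ring))
  refine ⟨mul_mem huU hvU, p, r, hp, hr, ?_, ?_⟩
  · rw [hC.ev_units_mul hu0.ge hv0.ge, hpq, hqr, mul_assoc]
  · rw [← div_mul_div_cancel p q r, ← div_mul_div_comm]
    exact mul_mem hupq hvqr

lemma mem_congruentToFraction_of_mem_L (hπ : hC.IsUniformizer O P n π)
    (hO : finrank k (res O) = 1) (hn : 3 * t ≤ n) {u : Fˣ} (hu : u ∈ hC.unitsLE O n)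
    (huL : (u : F) ∈ L (single O (n + t : ℤ))) : u ∈ hC.congruentToFraction O P n π := by
  have hu0 := hπ.ord_eq_zero_of_mem_unitsLE hu
  obtain ⟨f, g, hf, hg, he⟩ := hπ.exists_ev_eq_mul_ev hO hn (hC.ev_ne_zero hu0)
  have hgU : g ∈ hC.unitsLE O n := hC.mem_unitsLE_of_mem_L hO (by omega) hg
  refine ⟨hu, f, g, hf, hC.L_single_mono O (by omega) hg, he, ?_⟩
  rw [div_div_eq_mul_div]
  refine hπ.div_mem_symbolPreimage hO (mul_mem hu hgU) (hC.mem_unitsLE_of_mem_L hO le_rfl hf)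
    (hC.mul_mem_L_single (by omega) huL hg) (hC.L_single_mono O (by omega) hf) ?_
  rw [hC.ev_units_mul hu0.ge (hπ.ord_eq_zero_of_mem_unitsLE hgU).ge, he]

lemma mem_congruentToFraction (hπ : hC.IsUniformizer O P n π) (hO : finrank k (res O) = 1)
    (hn : 3 * t ≤ n) {u : Fˣ} (hu : u ∈ hC.unitsLE O n) : u ∈ hC.congruentToFraction O P n π := by
  let G : Subgroup Fˣ :=
    { carrier := hC.congruentToFraction O P n π
      one_mem' := hC.one_mem_congruentToFraction O P n π
      inv_mem' := hπ.inv_mem_congruentToFraction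
      mul_mem' := hπ.mul_mem_congruentToFraction hO hn }
  exact hC.unitsLE_le_of_mem_L (G := G) hO
    (fun _ => hπ.mem_congruentToFraction_of_mem_L hO hn) (by omega) hu

theorem symbol_mem_Fsub_of_ev_eq_one (hπ : hC.IsUniformizer O P n π)
    (hO : finrank k (res O) = 1) (hn : 3 * t ≤ n) {u : Fˣ} (hu : u ∈ hC.unitsLE O n)
    (he : ev P (u : F) = 1) : symbol u π ∈ Fsub k res ord n := by
  obtain ⟨-, f, g, hf, hg, hfg, hdiv⟩ := hπ.mem_congruentToFraction hO hn hu
  have hfg' : f / g ∈ symbolPreimage (Fsub k res ord n) π :=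
    hπ.div_mem_symbolPreimage hO (hC.mem_unitsLE_of_mem_L hO le_rfl hf)
      (hC.mem_unitsLE_of_mem_L hO le_rfl hg) (hC.L_single_mono O (by omega) hf)
      (hC.L_single_mono O (by omega) hg) (by rw [hfg, he, one_mul])
  rw [← mem_symbolPreimage, ← div_mul_cancel u (f / g)]
  exact mul_mem hdiv hfg'

lemma symbol_mem_of_unitsLE_le {Q : Pt} {ρ : Fˣ} (hπ : hC.IsUniformizer O P n π)
    (hρ : hC.IsUniformizer O Q n ρ) (hPQ : P ≠ Q) (hO : finrank k (res O) = 1) (hn : 3 * t ≤ n)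
    {N : AddSubgroup (K2 F)} (hN : Fsub k res ord n ≤ N)
    (hUπ : hC.unitsLE O n ≤ symbolPreimage N π) (hUρ : hC.unitsLE O n ≤ symbolPreimage N ρ) :
    symbol ρ π ∈ N := by
  have hρP : ord P (ρ : F) = 0 := hρ.ord_of_ne hPQ hπ.notMem
  obtain ⟨f, g, hf, hg, he⟩ := hπ.exists_ev_eq_mul_ev hO hn (hC.ev_ne_zero hρP)
  have hfU : f ∈ hC.unitsLE O n := hC.mem_unitsLE_of_mem_L hO le_rfl hf
  have hgU : g ∈ hC.unitsLE O n := hC.mem_unitsLE_of_mem_L hO (by omega) hg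
  have hne : ρ * g ≠ f := by
    intro h
    have := hρ.ord_eq_zero_of_mem_unitsLE (eq_div_of_mul_eq' h ▸ div_mem hfU hgU)
    rw [hρ.ord_self] at this
    exact one_ne_zero this
  obtain ⟨h, hh, hsymbol⟩ := hπ.exists_symbol_eq_zero hO hne
    (hC.mul_mem_L_single (by omega) hρ.mem_L hg) (hC.L_single_mono O (by omega) hf)
    (by rw [hC.ev_units_mul hρP.ge (hπ.ord_eq_zero_of_mem_unitsLE hgU).ge, he])
  have hgf := div_mem hgU hfU
  have hhf := div_mem hh hfU
  rw [mul_div_assoc, symbol_mul_left, symbol_mul_right, symbol_mul_right, add_assoc] at hsymbol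
  rw [eq_neg_of_add_eq_zero_left hsymbol]
  exact neg_mem (add_mem (symbol_mem_comm.1 (hUρ hhf))
    (add_mem (hUπ hgf) (hN (hC.symbol_mem_Fsub hO hgf hhf))))

end IsUniformizer

end SymbolsAtPoint

theorem Fsub_succ_le {O : Pt} (hO : finrank k (res O) = 1) {n : ℕ} (hn : 3 * t ≤ n) {π : Pt → Fˣ}
    (hπ : ∀ P ∈ pointsLE k res O (n + 1) \ pointsLE k res O n, hC.IsUniformizer O P n (π P)) :
    Fsub k res ord (n + 1) ≤ Fsub k res ord n ⊔
      ⨆ P : ↥(pointsLE k res O (n + 1) \ pointsLE k res O n),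
        symbolImage (hC.unitsLE O n) (π P) := by
  set N := Fsub k res ord n ⊔ ⨆ P : ↥(pointsLE k res O (n + 1) \ pointsLE k res O n),
    symbolImage (hC.unitsLE O n) (π P)
  have hle : hC.unitsLE O (n + 1) ≤ Subgroup.closure (hC.unitsLE O n ∪
      π '' (pointsLE k res O (n + 1) \ pointsLE k res O n)) :=
    hC.sUnits_le_closure fun P hP => (hπ P hP).divisor_sub_single_mem
  have hU : ∀ P ∈ pointsLE k res O (n + 1) \ pointsLE k res O n,
      hC.unitsLE O n ≤ symbolPreimage N (π P) := fun P hP u hu =>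
    (le_iSup (fun P : ↥(pointsLE k res O (n + 1) \ pointsLE k res O n) =>
      symbolImage (hC.unitsLE O n) (π P)) ⟨P, hP⟩).trans le_sup_right ⟨u, hu, rfl⟩
  refine (AddSubgroup.closure_le _).2 ?_
  rintro _ ⟨f, g, hf, hg, rfl⟩
  refine symbol_mem_of_mem_closure ?_ (hle fun P hP => Or.inr (hf P (Finsupp.mem_support_iff.1 hP)))
    (hle fun P hP => Or.inr (hg P (Finsupp.mem_support_iff.1 hP)))
  rintro a (ha | ⟨Q, hQ, rfl⟩) b (hb | ⟨P, hP, rfl⟩)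
  · exact le_sup_left (a := Fsub k res ord n) (hC.symbol_mem_Fsub hO ha hb)
  · exact hU P hP ha
  · exact symbol_mem_comm.1 (hU Q hQ hb)
  · by_cases hPQ : P = Q
    · rw [hPQ, symbol_self]
      exact hU Q hQ (hC.neg_one_mem_sUnits _)
    · exact (hπ P hP).symbol_mem_of_unitsLE_le (hπ Q hQ) hPQ hO hn le_sup_left (hU P hP) (hU Q hQ)

section TameSymbol

variable {T : K2 F →+ Π₀ P : Pt, Additive (res P)ˣ} {O : Pt} {n : ℕ}

lemma tameSymbol_apply_eq_ev (hT : IsTameSymbol ord ev T) {f g : Fˣ} {P : Pt}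
    (hf : ord P (f : F) = 0) (hg : ord P (g : F) = 1) :
    ((T (symbol f g) P).toMul : res P) = ev P (f : F) := by
  rw [hT f g P, hf, hg]
  simp

lemma tameSymbol_apply_eq_zero (hC : IsProjCurve k F res ord ev L t) (hT : IsTameSymbol ord ev T)
    {f g : Fˣ} {P : Pt} (hf : ord P (f : F) = 0) (hg : ord P (g : F) = 0) :
    T (symbol f g) P = 0 := by
  have h := hT f g P
  simp only [hf, hg, mul_zero, zpow_zero, neg_zero, mul_one, Units.val_one, hC.ev_one] at h
  exact Units.ext h

lemma Fsub_le_comap_supportedOn (hC : IsProjCurve k F res ord ev L t) (hT : IsTameSymbol ord ev T)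
    (O : Pt) (n : ℕ) : Fsub k res ord n ≤ (supportedOn _ (pointsLE k res O n)).comap T := by
  refine (AddSubgroup.closure_le _).2 ?_
  rintro _ ⟨f, g, hf, hg, rfl⟩ P hP
  exact hC.tameSymbol_apply_eq_zero hT (of_not_not fun h => hP (Or.inr (hf P h)))
    (of_not_not fun h => hP (Or.inr (hg P h)))

lemma tameSymbol_sub_single_mem (hC : IsProjCurve k F res ord ev L t)
    (hT : IsTameSymbol ord ev T) {P : Pt} {π : Fˣ} (hπ : hC.IsUniformizer O P n π) {u : Fˣ}
    (hu : u ∈ hC.unitsLE O n) [DecidableEq Pt] :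
    T (symbol u π) - DFinsupp.single P (T (symbol u π) P) ∈
      supportedOn (fun P => Additive (res P)ˣ) (pointsLE k res O n) := by
  intro Q hQ
  rw [DFinsupp.sub_apply]
  by_cases hQP : Q = P
  · subst hQP
    rw [DFinsupp.single_eq_same, sub_self]
  · rw [DFinsupp.single_eq_of_ne hQP, sub_zero]
    exact hC.tameSymbol_apply_eq_zero hT (hC.mem_sUnits_iff_ord.1 hu Q hQ) (hπ.ord_of_ne hQP hQ)

lemma mem_Fsub_of_mem_iSup_symbolImage (hT : IsTameSymbol ord ev T)
    (hO : finrank k (res O) = 1) (hn : 3 * t ≤ n) {S : Set Pt} {π : Pt → Fˣ}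
    (hπ : ∀ P ∈ S, hC.IsUniformizer O P n (π P)) {x : K2 F}
    (hx : x ∈ ⨆ P : S, symbolImage (hC.unitsLE O n) (π P))
    (hTx : T x ∈ supportedOn (fun P => Additive (res P)ˣ) (pointsLE k res O n)) :
    x ∈ Fsub k res ord n := by
  obtain ⟨z, hz, rfl⟩ := exists_finsupp_sum_eq_of_mem_iSup hx
  choose u hu hz using hz
  refine sum_mem fun P _ => ?_
  have apply_of_ne : ∀ Q ≠ P, T (z Q) (P : Pt) = 0 := fun Q hQP => by
    rw [← hz Q]
    exact hC.tameSymbol_apply_eq_zero hT (hC.mem_sUnits_iff_ord.1 (hu Q) P (hπ P P.2).notMem)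
      ((hπ Q Q.2).ord_of_ne (fun h => hQP (Subtype.ext h.symm)) (hπ P P.2).notMem)
  have apply_self : T (z P) (P : Pt) = 0 := by
    rw [← hTx P (hπ P P.2).notMem, Finsupp.sum, map_sum, DFinsupp.finsetSum_apply,
      Finset.sum_eq_single P (fun Q _ => apply_of_ne Q)]
    intro hP
    rw [Finsupp.notMem_support_iff.1 hP, map_zero, DFinsupp.zero_apply]
  change z P ∈ Fsub k res ord n
  rw [← hz P] at apply_self ⊢
  refine (hπ P P.2).symbol_mem_Fsub_of_ev_eq_one hO hn (hu P) ?_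
  rw [← tameSymbol_apply_eq_ev hT ((hπ P P.2).ord_eq_zero_of_mem_unitsLE (hu P))
    (hπ P P.2).ord_self, apply_self, toMul_zero, Units.val_one]

lemma exists_isUniformizer_of_mem_diff (hO : finrank k (res O) = 1) (hn : 3 * t ≤ n) :
    ∃ π : Pt → Fˣ, ∀ P ∈ pointsLE k res O (n + 1) \ pointsLE k res O n,
      hC.IsUniformizer O P n (π P) := by
  choose! π hπ using fun P (hP : P ≠ O) (hPn : finrank k (res P) = n + 1) =>
    hC.exists_isUniformizer hO (by omega) hP hPn
  refine ⟨π, fun P hP => ?_⟩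
  obtain ⟨hPO, hPn⟩ := notMem_pointsLE.1 hP.2
  exact hπ P hPO (le_antisymm (hP.1.resolve_left hPO) hPn)

lemma mem_Fsub_of_mem_Fsub_succ (hC : IsProjCurve k F res ord ev L t) (hT : IsTameSymbol ord ev T)
    (hO : finrank k (res O) = 1) (hn : 3 * t ≤ n) {x : K2 F} (hx : x ∈ Fsub k res ord (n + 1))
    (hTx : T x ∈ supportedOn (fun P => Additive (res P)ˣ) (pointsLE k res O n)) :
    x ∈ Fsub k res ord n := by
  obtain ⟨π, hπ⟩ := hC.exists_isUniformizer_of_mem_diff hO hn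
  obtain ⟨y, hy, z, hz, rfl⟩ := AddSubgroup.mem_sup.1 (hC.Fsub_succ_le hO hn hπ hx)
  have hTy := AddSubgroup.mem_comap.1 (hC.Fsub_le_comap_supportedOn hT O n hy)
  rw [map_add, AddSubgroup.add_mem_cancel_left _ hTy] at hTx
  exact add_mem hy (hC.mem_Fsub_of_mem_iSup_symbolImage hT hO hn hπ hz hTx)

lemma exists_mem_Fsub (hC : IsProjCurve k F res ord ev L t) (x : K2 F) :
    ∃ m, x ∈ Fsub k res ord m := by
  classical
  have iSup_eq_top : ⨆ m, Fsub k res ord m = ⊤ := K2_eq_top_of_forall_symbol_mem fun a b => by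
    set s := (hC.divisor a).support ∪ (hC.divisor b).support
    have hle {P : Pt} (hP : P ∈ s) : finrank k (res P) ≤ s.sup fun P => finrank k (res P) :=
      Finset.le_sup (f := fun P => finrank k (res P)) hP
    exact AddSubgroup.mem_iSup_of_mem _ (AddSubgroup.subset_closure ⟨a, b,
      fun P hP => hle (Finset.mem_union_left _ (Finsupp.mem_support_iff.2 hP)),
      fun P hP => hle (Finset.mem_union_right _ (Finsupp.mem_support_iff.2 hP)), rfl⟩)
  have directed : Directed (· ≤ ·) (Fsub k res ord) :=
    directed_of_isDirected_le fun _ _ => Fsub_mono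
  exact (AddSubgroup.mem_iSup_of_directed directed).1 (iSup_eq_top ▸ AddSubgroup.mem_top x)

theorem Fsub_eq_comap_supportedOn (hC : IsProjCurve k F res ord ev L t)
    (hT : IsTameSymbol ord ev T) (hO : finrank k (res O) = 1) (hn : 3 * t ≤ n) :
    Fsub k res ord n =
      (supportedOn (fun P => Additive (res P)ˣ) (pointsLE k res O n)).comap T := by
  refine (hC.Fsub_le_comap_supportedOn hT O n).antisymm fun x hx => ?_
  have descent (j : ℕ) (hxj : x ∈ Fsub k res ord (n + j)) : x ∈ Fsub k res ord n := by
    induction j with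
    | zero => exact hxj
    | succ j ih =>
      exact ih (hC.mem_Fsub_of_mem_Fsub_succ hT hO (by omega) hxj
        (supportedOn_mono (pointsLE_mono (by omega)) hx))
  obtain ⟨m, hm⟩ := hC.exists_mem_Fsub x
  exact descent m (Fsub_mono (by omega) hm)

lemma supportedOn_succ_le (hC : IsProjCurve k F res ord ev L t) (hT : IsTameSymbol ord ev T)
    (hO : finrank k (res O) = 1) (hn : 3 * t ≤ n) :
    supportedOn (fun P => Additive (res P)ˣ) (pointsLE k res O (n + 1)) ≤
      T.range ⊔ supportedOn _ (pointsLE k res O n) := by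
  classical
  obtain ⟨π, hπ⟩ := hC.exists_isUniformizer_of_mem_diff hO hn
  refine supportedOn_le_of_single_mem fun P hP y => ?_
  by_cases hPn : P ∈ pointsLE k res O n
  · exact AddSubgroup.mem_sup_right
      (single_mem_supportedOn (M := fun P => Additive (res P)ˣ) hPn y)
  have hπP := hπ P ⟨hP, hPn⟩
  obtain ⟨f, g, hf, hg, he⟩ := hπP.exists_ev_eq_mul_ev hO hn y.toMul.ne_zero
  have hfU : f ∈ hC.unitsLE O n := hC.mem_unitsLE_of_mem_L hO le_rfl hf
  have hgU : g ∈ hC.unitsLE O n := hC.mem_unitsLE_of_mem_L hO (by omega) hg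
  have hf0 := hπP.ord_eq_zero_of_mem_unitsLE hfU
  have hg0 := hπP.ord_eq_zero_of_mem_unitsLE hgU
  have hfgU := div_mem hfU hgU
  have apply_self : T (symbol (f / g) (π P)) P = y := by
    apply Additive.toMul.injective
    ext
    rw [tameSymbol_apply_eq_ev hT (hπP.ord_eq_zero_of_mem_unitsLE hfgU) hπP.ord_self,
      hC.ev_units_div hf0 hg0, he, mul_div_cancel_right₀ _ (hC.ev_ne_zero hg0)]
  have hsub := hC.tameSymbol_sub_single_mem hT hπP hfgU
  rw [apply_self] at hsub
  rw [← sub_sub_cancel (T (symbol (f / g) (π P))) (DFinsupp.single P y)]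
  exact sub_mem (AddSubgroup.mem_sup_left ⟨_, rfl⟩) (AddSubgroup.mem_sup_right hsub)

theorem range_sup_supportedOn_eq_top (hC : IsProjCurve k F res ord ev L t)
    (hT : IsTameSymbol ord ev T) (hO : finrank k (res O) = 1) (hn : 3 * t ≤ n) :
    T.range ⊔ supportedOn (fun P => Additive (res P)ˣ) (pointsLE k res O n) = ⊤ := by
  classical
  have descent (j : ℕ) : supportedOn (fun P => Additive (res P)ˣ) (pointsLE k res O (n + j)) ≤
      T.range ⊔ supportedOn _ (pointsLE k res O n) := by
    induction j with
    | zero => exact le_sup_right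
    | succ j ih =>
      exact (hC.supportedOn_succ_le hT hO (n := n + j) (by omega)).trans (sup_le le_sup_left ih)
  refine (AddSubgroup.eq_top_iff' _).2 fun y =>
    descent (y.support.sup fun P => finrank k (res P)) fun P hP => of_not_not fun hyP => hP ?_
  exact Or.inr (Nat.le_add_left_of_le
    (Finset.le_sup (f := fun P => finrank k (res P)) (DFinsupp.mem_support_iff.2 hyP)))

end TameSymbol

end IsProjCurve

/-- last part of Theorem `introker1`.  Let `C` be a regular,
irreducible curve, projective over `k`, with function field `F`, arithmetic genus `t`
and a `k`-rational point `O`.  For every `d ≥ 3t + 1`, the tame symbol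
`T : K₂(F) → ∐_{P ∈ C} k(P)^*` and its restriction
`F_{d-1} → ∐_{P ∈ {O} ∪ C_{≤ d-1}} k(P)^*` yield the same kernel and cokernel:
(i) the kernel of `T` is contained in `F_{d-1}` (so the two kernels coincide);
(ii) the restriction of `T` to `F_{d-1}` is supported in `{O} ∪ C_{≤ d-1}`;
(iii) & (iv) the inclusion induces a bijection between the two cokernels. -/
theorem statement4 (k F : Type*) [Field k] [Field F] [Algebra k F]
    {Pt : Type*} (res : Pt → Type*) [∀ P, Field (res P)] [∀ P, Algebra k (res P)]
    (ord : Pt → F → ℤ) (ev : ∀ P, F → res P)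
    (L : (Pt →₀ ℤ) → Submodule k F) (t : ℕ)
    (hC : IsProjCurve k F res ord ev L t)
    (O : Pt) (hO : Module.finrank k (res O) = 1)
    (T : K2 F →+ Π₀ P : Pt, Additive ((res P)ˣ)) (hT : IsTameSymbol ord ev T)
    (d : ℕ) (hd : 3 * t + 1 ≤ d) :
    -- (i) the two kernels coincide:
    (∀ x : K2 F, T x = 0 → x ∈ Fsub k res ord (d - 1)) ∧
    -- (ii) the restriction lands in `∐_{P ∈ {O} ∪ C_{≤ d-1}} k(P)^*`:
    (∀ x ∈ Fsub k res ord (d - 1),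
      ∀ P, ¬(P = O ∨ Module.finrank k (res P) ≤ d - 1) → T x P = 0) ∧
    -- (iii) the induced map between the cokernels is injective:
    (∀ y : Π₀ P : Pt, Additive ((res P)ˣ),
      (∀ P, ¬(P = O ∨ Module.finrank k (res P) ≤ d - 1) → y P = 0) →
      (∃ x : K2 F, T x = y) → ∃ x ∈ Fsub k res ord (d - 1), T x = y) ∧
    -- (iv) the induced map between the cokernels is surjective:
    (∀ y : Π₀ P : Pt, Additive ((res P)ˣ),
      ∃ x : K2 F, ∀ P, ¬(P = O ∨ Module.finrank k (res P) ≤ d - 1) →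
        (y - T x) P = 0) := by
  have hn : 3 * t ≤ d - 1 := by omega
  have mem_Fsub {x : K2 F}
      (hx : T x ∈ supportedOn (fun P => Additive (res P)ˣ) (pointsLE k res O (d - 1))) :
      x ∈ Fsub k res ord (d - 1) :=
    (hC.Fsub_eq_comap_supportedOn hT hO hn).ge hx
  refine ⟨fun x hx => mem_Fsub (by rw [hx]; exact zero_mem _),
    hC.Fsub_le_comap_supportedOn hT O (d - 1), ?_, fun y => ?_⟩
  · rintro _ hy ⟨x, rfl⟩
    exact ⟨x, mem_Fsub hy, rfl⟩
  · obtain ⟨_, ⟨x, rfl⟩, hx⟩ := exists_sub_mem_supportedOn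
      ((AddSubgroup.eq_top_iff' _).1 (hC.range_sup_supportedOn_eq_top hT hO hn) y)
    exact ⟨x, hx⟩

end
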